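/- Let n ≥ 2 and let D be a compact convex body in Euclidean space ℝⁿ satisfying the R₁,R₂ ball-sandwich condition for some reals 0 < R₂ ≤ R₁. Let o ∈ ℝⁿ and r > 0 be the center and radius of a maximal inscribed ball of D, i.e. Metric.closedBall o r ⊆ D and every closed ball contained in D has radius at most r. Then D ⊆ Metric.closedBall o (Real.sqrt ((R₁ − R₂)² − (R₁ − r)²) + R₂); in particular every point of the boundary ∂D is at distance at most √((R₁ − R₂)² − (R₁ − r)²) + R₂ from o. (The hypotheses force R₂ ≤ r ≤ R₁, so the expression under the square root is nonnegative.) -/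

import Mathlib

lemma aux_ball_sub {E : Type*} [NormedAddCommGroup E] [NormedSpace ℝ E] [Nontrivial E]
    {a b : E} {s R : ℝ} (hs : 0 ≤ s) (h : Metric.closedBall a s ⊆ Metric.closedBall b R) :
    ‖a - b‖ + s ≤ R := by
  by_cases hab : a - b = 0
  · obtain ⟨e, he⟩ := exists_norm_eq E hs
    have : a + e ∈ Metric.closedBall b R := h (by simp [he])
    rw [mem_closedBall_iff_norm] at this
    have h2 : a + e - b = e := by rw [sub_eq_zero] at hab; simp [hab]
    rw [h2, he] at this
    simpa [hab] using this
  · have hpos : 0 < ‖a - b‖ := norm_pos_iff.mpr hab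
    have : a + (s / ‖a - b‖) • (a - b) ∈ Metric.closedBall b R := h (by
      rw [mem_closedBall_iff_norm, add_sub_cancel_left, norm_smul, Real.norm_of_nonneg (by positivity)]
      exact (div_mul_cancel₀ s hpos.ne').le)
    rw [mem_closedBall_iff_norm] at this
    have h2 : a + (s / ‖a - b‖) • (a - b) - b = (1 + s / ‖a - b‖) • (a - b) := by
      rw [add_smul, one_smul]; abel
    rw [h2, norm_smul, Real.norm_of_nonneg (by positivity), add_mul,
      div_mul_cancel₀ s hpos.ne', one_mul] at this
    exact this

lemma aux_meet {E : Type*} [NormedAddCommGroup E] [InnerProductSpace ℝ E] [FiniteDimensional ℝ E]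
    {D : Set E} {r : ℝ} (hr : 0 < r)
    (hmax : ∀ (o' : E) (r' : ℝ), Metric.closedBall o' r' ⊆ D → r' ≤ r)
    {c : E} (hc : c ∈ D) : ∃ q ∈ frontier D, ‖q - c‖ ≤ r := by
  by_contra! hcon
  have hconn : IsPreconnected (Metric.closedBall c r) := (convex_closedBall c r).isPreconnected
  have hdisj : Metric.closedBall c r ∩ frontier D = ∅ := by
    ext q
    simp only [Set.mem_inter_iff, mem_closedBall_iff_norm, Set.mem_empty_iff_false, iff_false, not_and]
    intro h1 h2
    exact absurd h1 (not_le.mpr (hcon q h2))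
  have hsub : Metric.closedBall c r ⊆ D := by
    by_contra hns
    obtain ⟨z, hz, hz'⟩ := Set.not_subset.mp hns
    have hnf : ∀ x ∈ Metric.closedBall c r, x ∉ frontier D := fun x hx hf => by
      have : x ∈ Metric.closedBall c r ∩ frontier D := ⟨hx, hf⟩
      rw [hdisj] at this; exact this
    have hcov : ∀ x ∈ Metric.closedBall c r, x ∈ closure D → x ∈ interior D := fun x hx hcl => by
      by_contra hni
      exact hnf x hx ⟨hcl, hni⟩
    have hcb : c ∈ Metric.closedBall c r := Metric.mem_closedBall_self hr.le
    obtain ⟨x, -, hx1, hx2⟩ := hconn (interior D) (closure D)ᶜ isOpen_interior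
      isClosed_closure.isOpen_compl
      (fun x hx => by
        by_cases hcl : x ∈ closure D
        · exact Or.inl (hcov x hx hcl)
        · exact Or.inr hcl)
      ⟨c, hcb, hcov c hcb (subset_closure hc)⟩
      ⟨z, hz, fun hcl => hz' (interior_subset (hcov z hz hcl))⟩
    exact hx2 (subset_closure (interior_subset hx1))
  have hint : Metric.closedBall c r ⊆ interior D := by
    intro z hz
    by_contra hz'
    have : z ∈ Metric.closedBall c r ∩ frontier D := ⟨hz, subset_closure (hsub hz), hz'⟩
    rw [hdisj] at this; exact this
  obtain ⟨δ, hδ, hsubδ⟩ := (isCompact_closedBall c r).exists_cthickening_subset_open isOpen_interior hint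
  rw [cthickening_closedBall hδ.le hr.le] at hsubδ
  have := hmax c _ (hsubδ.trans interior_subset)
  linarith

lemma aux_contact {E : Type*} [NormedAddCommGroup E] [InnerProductSpace ℝ E] [FiniteDimensional ℝ E]
    {D : Set E} (hD : IsCompact D) {r : ℝ} (hr : 0 < r) {o : E}
    (hins : Metric.closedBall o r ⊆ D)
    (hmax : ∀ (o' : E) (r' : ℝ), Metric.closedBall o' r' ⊆ D → r' ≤ r) (v : E) :
    ∃ p ∈ frontier D, ‖p - o‖ = r ∧ 0 ≤ inner ℝ (p - o) v := by
  have hfar : ∀ q ∈ frontier D, r ≤ ‖q - o‖ := by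
    intro q hq
    by_contra! hlt
    have : q ∈ interior D := by
      refine interior_mono hins (Metric.ball_subset_interior_closedBall ?_)
      rwa [mem_ball_iff_norm]
    exact hq.2 this
  have key : ∀ ε, 0 < ε → ε ≤ r → ∃ q ∈ frontier D, 0 ≤ inner ℝ (q - o) v ∧ ‖q - o‖ ≤ r + ε := by
    intro ε hε hεr
    set t := ε / (‖v‖ + 1) with ht
    have htpos : 0 < t := by positivity
    have htv : ‖t • v‖ ≤ ε := by
      rw [norm_smul, Real.norm_of_nonneg htpos.le, ht, div_mul_eq_mul_div, div_le_iff₀ (by positivity)]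
      nlinarith [norm_nonneg v]
    obtain ⟨q, hq, hqr⟩ := aux_meet hr hmax (c := o + t • v) (hins (by
      rw [mem_closedBall_iff_norm, add_sub_cancel_left]; linarith))
    refine ⟨q, hq, ?_, ?_⟩
    · have h1 := hfar q hq
      have h2 : q - (o + t • v) = (q - o) - t • v := by abel
      rw [h2] at hqr
      have h3 := norm_sub_sq_real (q - o) (t • v)
      rw [inner_smul_right] at h3
      have h4 : ‖q - o - t • v‖ ^ 2 ≤ r ^ 2 := by gcongr
      have h5 : r ^ 2 ≤ ‖q - o‖ ^ 2 := by gcongr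
      have h6 : 0 ≤ t * inner ℝ (q - o) v := by nlinarith [sq_nonneg ‖t • v‖]
      exact nonneg_of_mul_nonneg_right h6 htpos
    · have h2 : q - o = (q - (o + t • v)) + t • v := by abel
      rw [h2]
      exact (norm_add_le _ _).trans (by linarith)
  have hK : IsCompact (frontier D) := hD.of_isClosed_subset isClosed_frontier hD.isClosed.frontier_subset
  have hC : IsCompact (frontier D ∩ {q | 0 ≤ inner ℝ (q - o) v}) :=
    hK.inter_right (isClosed_le continuous_const (by fun_prop))
  obtain ⟨q0, hq0, hq0', -⟩ := key r hr le_rfl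
  obtain ⟨p, hp, hpmin⟩ := hC.exists_isMinOn ⟨q0, hq0, hq0'⟩
    (f := fun q => ‖q - o‖) (by fun_prop)
  refine ⟨p, hp.1, le_antisymm ?_ (hfar p hp.1), hp.2⟩
  refine le_of_forall_pos_le_add fun ε hε => ?_
  obtain ⟨q, hq, hq', hq''⟩ := key (min ε r) (lt_min hε hr) (min_le_right _ _)
  have h1 : ‖p - o‖ ≤ ‖q - o‖ := hpmin ⟨hq, hq'⟩
  linarith [min_le_left ε r]

lemma aux_far {E : Type*} [NormedAddCommGroup E] [InnerProductSpace ℝ E] [Nontrivial E]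
    {D : Set E} (hD : IsCompact D) {o : E} (ho : o ∈ D) :
    ∃ p ∈ frontier D, ∀ q ∈ D, ‖q - o‖ ≤ ‖p - o‖ := by
  obtain ⟨p, hp, hpmax⟩ := hD.exists_isMaxOn ⟨o, ho⟩
    (f := fun q => ‖q - o‖) (by fun_prop)
  refine ⟨p, ⟨subset_closure hp, fun hpi => ?_⟩, fun q hq => hpmax hq⟩
  obtain ⟨δ, hδ, hsub⟩ := Metric.nhds_basis_closedBall.mem_iff.mp (mem_interior_iff_mem_nhds.mp hpi)
  have : Metric.closedBall p δ ⊆ Metric.closedBall o ‖p - o‖ := by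
    intro q hq
    rw [mem_closedBall_iff_norm]
    exact hpmax (hsub hq)
  have := aux_ball_sub hδ.le this
  linarith

/-- Bound on the circumscribed radius centered at the center of a maximal inscribed ball
of a κ₁,κ₂-convex Euclidean domain. -/
theorem circumradius_estimate_euclidean
    {n : ℕ} (hn : 2 ≤ n) (D : Set (EuclideanSpace ℝ (Fin n)))
    (hDcomp : IsCompact D) (hDconv : Convex ℝ D) (hDint : (interior D).Nonempty)
    (R₁ R₂ : ℝ) (hR₂ : 0 < R₂) (hR₂₁ : R₂ ≤ R₁)
    (hsand : ∀ p ∈ frontier D, ∃ x₁ x₂ : EuclideanSpace ℝ (Fin n),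
      dist x₁ p = R₁ ∧ dist x₂ p = R₂ ∧
      Metric.closedBall x₂ R₂ ⊆ D ∧ D ⊆ Metric.closedBall x₁ R₁)
    (o : EuclideanSpace ℝ (Fin n)) (r : ℝ) (hr : 0 < r)
    (hins : Metric.closedBall o r ⊆ D)
    (hmax : ∀ (o' : EuclideanSpace ℝ (Fin n)) (r' : ℝ),
      Metric.closedBall o' r' ⊆ D → r' ≤ r) :
    D ⊆ Metric.closedBall o (Real.sqrt ((R₁ - R₂) ^ 2 - (R₁ - r) ^ 2) + R₂) := by
  have : Nonempty (Fin n) := ⟨⟨0, by omega⟩⟩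
  obtain ⟨q, hq, hqmax⟩ := aux_far hDcomp (hins (Metric.mem_closedBall_self hr.le))
  obtain ⟨-, x₂, -, hx₂, hx₂D, -⟩ := hsand q hq
  obtain ⟨p, hp, hpr, hpv⟩ := aux_contact hDcomp hr hins hmax (x₂ - o)
  obtain ⟨x₁, -, hx₁, -, -, hDx₁⟩ := hsand p hp
  have h1 := aux_ball_sub hr.le (hins.trans hDx₁)
  have h2 := aux_ball_sub hR₂.le (hx₂D.trans hDx₁)
  rw [norm_sub_rev] at h1
  rw [dist_eq_norm] at hx₁ hx₂
  have e1 : x₁ - p = (x₁ - o) - (p - o) := by abel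
  have e2 : x₂ - x₁ = (x₂ - o) - (x₁ - o) := by abel
  have e3 : q - o = (x₂ - o) - (x₂ - q) := by abel
  rw [e1] at hx₁
  rw [e2] at h2
  have hq2 : ‖q - o‖ ≤ ‖x₂ - o‖ + R₂ := by
    rw [e3, ← hx₂]; exact norm_sub_le _ _
  suffices hs : ‖x₂ - o‖ ≤ Real.sqrt ((R₁ - R₂) ^ 2 - (R₁ - r) ^ 2) by
    intro z hz
    rw [mem_closedBall_iff_norm]
    linarith [hqmax z hz]
  generalize x₁ - o = w at *
  generalize p - o = y at *
  generalize x₂ - o = v at *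
  apply Real.le_sqrt_of_sq_le
  have hw : ‖w‖ ^ 2 ≤ (R₁ - r) ^ 2 := by
    have := norm_nonneg w
    gcongr; linarith
  have hrR : 0 ≤ R₁ - r := by linarith [norm_nonneg w]
  have hwy := norm_sub_sq_real w y
  rw [hx₁, hpr] at hwy
  have hz : r • w + (R₁ - r) • y = 0 := by
    have h := norm_add_sq_real (r • w) ((R₁ - r) • y)
    rw [inner_smul_left, inner_smul_right, norm_smul, norm_smul, Real.norm_of_nonneg hr.le,
      Real.norm_of_nonneg hrR, hpr] at h
    simp only [conj_trivial] at h
    have h' : ‖r • w + (R₁ - r) • y‖ ^ 2 = r * R₁ * (‖w‖ ^ 2 - (R₁ - r) ^ 2) := by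
      rw [h]
      linear_combination (r * (R₁ - r)) * hwy
    have hle : ‖r • w + (R₁ - r) • y‖ ^ 2 ≤ 0 := by
      rw [h']
      exact mul_nonpos_of_nonneg_of_nonpos (by nlinarith) (by linarith)
    rw [← norm_eq_zero]
    exact pow_eq_zero_iff (two_ne_zero) |>.mp (le_antisymm hle (sq_nonneg _))
  have hwn : ‖w‖ = R₁ - r := by
    have h : r • w = -((R₁ - r) • y) := eq_neg_of_add_eq_zero_left hz
    have h' := congrArg norm h
    rw [norm_neg, norm_smul, norm_smul, Real.norm_of_nonneg hr.le,
      Real.norm_of_nonneg hrR, hpr] at h'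
    have : r * ‖w‖ = r * (R₁ - r) := by linarith
    exact mul_left_cancel₀ hr.ne' this
  have hwv : inner ℝ v w ≤ 0 := by
    have h := congrArg (fun z => inner ℝ z v) hz
    simp only [inner_add_left, inner_smul_left, inner_zero_left, conj_trivial] at h
    rw [real_inner_comm]
    have := mul_nonneg hrR hpv
    by_contra! hpos
    nlinarith [mul_pos hr hpos]
  have hvw := norm_sub_sq_real v w
  have h3 : ‖v - w‖ ^ 2 ≤ (R₁ - R₂) ^ 2 := by
    gcongr; linarith
  rw [hwn] at hvw
  linarith
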